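/- arXiv:2401.10161 — 3 statements merged into one kernel-verified Lean document; each statement's English description precedes it below -/
import Mathlib

section
/- Let y₀ ∈ W(0), assume the Slater condition and suppose S_{Y_+}(y₀) ≠ ∅. Then for every h ∈ S_{Y_+}(y₀), Graph(L_h) = {(z,y) ∈ Z × Y : h(z,-y) ≤ 0}. -/
/-!
Write `h (z, y) = a z + b y`. The first separation inequality makes `a` and `b` nonnegative on the
cones `Zp` and `Yp`. A continuous linear functional that is nonnegative on a set and nonpositive
at an interior point of it has a local minimum there, hence vanishes. So `b` is positive at any
interior point `k` of `Yp`, unless `b = 0`; in the latter case the second separation inequality at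
the Slater point `x₁` gives `0 ≤ a (g x₁)`, so `a = 0` too, contradicting `h ≠ 0`.

Since `b k > 0`, any `y` with `a z ≤ b y` can be moved along `-k` by a nonnegative multiple onto the
hyperplane `{y' | b y' = a z}`, which puts `(z, y)` in `Graph(L_h)`. The other inclusion is the
nonnegativity of `b` on `Yp`.
-/

open scoped Classical Pointwise

noncomputable section

/-- A convex cone: a nonempty convex set closed under multiplication by
nonnegative real scalars. -/
def IsConvexCone {E : Type*} [AddCommGroup E] [Module ℝ E] (K : Set E) : Prop :=
  K.Nonempty ∧ Convex ℝ K ∧ ∀ t : ℝ, 0 ≤ t → ∀ k ∈ K, t • k ∈ K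

/-- Graph(W_{Y_+}) = {(g x + z₊, f x + y₊) : x ∈ Ω, z₊ ∈ Z_+, y₊ ∈ Y_+}. -/
def GraphW {X Y Z : Type*} [AddCommGroup Y] [AddCommGroup Z]
    (Ω : Set X) (f : X → Y) (g : X → Z) (Yp : Set Y) (Zp : Set Z) : Set (Z × Y) :=
  {p | ∃ x ∈ Ω, ∃ zp ∈ Zp, ∃ yp ∈ Yp, p = (g x + zp, f x + yp)}

/-- W(0) = {f x : x ∈ Ω, g x ≤ 0}, where g x ≤ 0 means -g x ∈ Z_+. -/
def W0 {X Y Z : Type*} [AddCommGroup Z]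
    (Ω : Set X) (f : X → Y) (g : X → Z) (Zp : Set Z) : Set Y :=
  {y | ∃ x ∈ Ω, -g x ∈ Zp ∧ y = f x}

/-- a ∈ A is a minimal point of A: A ∩ (a - Y_+) ⊆ a + Y_+. -/
def IsMinimalPt {Y : Type*} [AddCommGroup Y]
    (Yp : Set Y) (A : Set Y) (a : Y) : Prop :=
  a ∈ A ∧ ∀ y ∈ A, a - y ∈ Yp → y - a ∈ Yp

/-- a ∈ A is a weak minimal point of A: A ∩ (a - Int Y_+) = ∅. -/
def IsWeakMinimalPt {Y : Type*} [NormedAddCommGroup Y] [NormedSpace ℝ Y]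
    (Yp : Set Y) (A : Set Y) (a : Y) : Prop :=
  a ∈ A ∧ ∀ y ∈ A, a - y ∉ interior Yp

/-- The set S_{Y_+}(y₀) of separating functionals: nonzero continuous linear
functionals h on Z × Y with h(z',y') ≤ h(0,y₀) ≤ h(z,y) for all
(z',y') ∈ (-Z_+) × (y₀ - Y_+) and (z,y) ∈ Graph(W_{Y_+}). -/
def SepSet {X Y Z : Type*} [NormedAddCommGroup Y] [NormedSpace ℝ Y]
    [NormedAddCommGroup Z] [NormedSpace ℝ Z]
    (Ω : Set X) (f : X → Y) (g : X → Z) (Yp : Set Y) (Zp : Set Z) (y₀ : Y) :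
    Set ((Z × Y) →L[ℝ] ℝ) :=
  {h | h ≠ 0 ∧ (∀ z' ∈ Zp, ∀ y' ∈ Yp, h (-z', y₀ - y') ≤ h (0, y₀)) ∧
    ∀ p ∈ GraphW Ω f g Yp Zp, h (0, y₀) ≤ h p}

/-- Graph(L_h), where L_h(z) := {y : h(z,-y) = 0} + Y_+. -/
def GraphLh {Y Z : Type*} [NormedAddCommGroup Y] [NormedSpace ℝ Y]
    [NormedAddCommGroup Z] [NormedSpace ℝ Z]
    (Yp : Set Y) (h : (Z × Y) →L[ℝ] ℝ) : Set (Z × Y) :=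
  {p | ∃ y', h (p.1, -y') = 0 ∧ p.2 - y' ∈ Yp}

/-- Graph of the Lagrange process L_{y₀} of (P(0)) at y₀. -/
def GraphLag {X Y Z : Type*} [NormedAddCommGroup Y] [NormedSpace ℝ Y]
    [NormedAddCommGroup Z] [NormedSpace ℝ Z]
    (Ω : Set X) (f : X → Y) (g : X → Z) (Yp : Set Y) (Zp : Set Z) (y₀ : Y) :
    Set (Z × Y) :=
  if (SepSet Ω f g Yp Zp y₀).Nonempty then
    ⋂ h ∈ SepSet Ω f g Yp Zp y₀, GraphLh Yp h
  else Set.univ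

/-- The feasible value set {f x + y : x ∈ Ω, y ∈ L(g x)} of the program (D_L),
for a set-valued map L : Z ⇉ Y given by its graph G. -/
def DSet {X Y Z : Type*} [AddCommGroup Y]
    (Ω : Set X) (f : X → Y) (g : X → Z) (G : Set (Z × Y)) : Set Y :=
  {y | ∃ x ∈ Ω, ∃ y', (g x, y') ∈ G ∧ y = f x + y'}

/-- B is a base of the cone K: a nonempty convex subset of K with 0 ∉ closure B
such that every nonzero k ∈ K has a unique representation k = t • b, t > 0, b ∈ B. -/
def IsBase {E : Type*} [NormedAddCommGroup E] [NormedSpace ℝ E] (K B : Set E) : Prop :=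
  B.Nonempty ∧ Convex ℝ B ∧ B ⊆ K ∧ (0 : E) ∉ closure B ∧
    ∀ k ∈ K, k ≠ 0 → ∃! tb : ℝ × E, 0 < tb.1 ∧ tb.2 ∈ B ∧ k = tb.1 • tb.2

/-- cone(S) = {t • s : t ≥ 0, s ∈ S}. -/
def coneGen {E : Type*} [AddCommGroup E] [Module ℝ E] (S : Set E) : Set E :=
  {y | ∃ t : ℝ, 0 ≤ t ∧ ∃ s ∈ S, y = t • s}

/-- a is a positive properly efficient point of A. -/
def PosEff {Y : Type*} [NormedAddCommGroup Y] [NormedSpace ℝ Y]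
    (Yp A : Set Y) (a : Y) : Prop :=
  a ∈ A ∧ ∃ φ : Y →L[ℝ] ℝ, (∀ y ∈ Yp, y ≠ 0 → 0 < φ y) ∧ ∀ y ∈ A, φ a ≤ φ y

/-- a is a Henig global properly efficient point of A. -/
def GHeEff {Y : Type*} [NormedAddCommGroup Y] [NormedSpace ℝ Y]
    (Yp A : Set Y) (a : Y) : Prop :=
  a ∈ A ∧ ∃ K : Set Y, Convex ℝ K ∧ (∀ t : ℝ, 0 ≤ t → ∀ k ∈ K, t • k ∈ K) ∧
    (∀ k ∈ K, -k ∈ K → k = 0) ∧ (∀ y ∈ Yp, y ≠ 0 → y ∈ interior K) ∧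
    ∀ y ∈ A, y - a ∉ -(interior K)

/-- a is a Henig properly efficient point of A. -/
def HeEff {Y : Type*} [NormedAddCommGroup Y] [NormedSpace ℝ Y]
    (Yp A : Set Y) (a : Y) : Prop :=
  a ∈ A ∧ ∃ B : Set Y, IsBase Yp B ∧ ∃ ε : ℝ, 0 < ε ∧
    closure (coneGen ((· - a) '' A)) ∩
      -(closure (coneGen (B + ε • Metric.closedBall (0 : Y) 1))) = {0}

/-- a is a super efficient point of A. -/
def SEEff {Y : Type*} [NormedAddCommGroup Y] [NormedSpace ℝ Y]
    (Yp A : Set Y) (a : Y) : Prop :=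
  a ∈ A ∧ ∃ ρ : ℝ, 0 < ρ ∧
    closure (coneGen ((· - a) '' A)) ∩ (Metric.closedBall (0 : Y) 1 - Yp) ⊆
      ρ • Metric.closedBall (0 : Y) 1


/-- Such a functional attains a local minimum at `u`, so its derivative, which is itself,
vanishes. -/
lemma eq_zero_of_nonneg_of_mem_interior {E : Type*} [NormedAddCommGroup E] [NormedSpace ℝ E]
    {K : Set E} (φ : E →L[ℝ] ℝ) (hφ : ∀ k ∈ K, 0 ≤ φ k) {u : E} (hu : u ∈ interior K)
    (hu0 : φ u ≤ 0) : φ = 0 := by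
  have hmin : IsLocalMin φ u := by
    filter_upwards [mem_interior_iff_mem_nhds.1 hu] with v hv
    exact hu0.trans (hφ v hv)
  exact hmin.hasFDerivAt_eq_zero φ.hasFDerivAt

lemma IsConvexCone.zero_mem {E : Type*} [AddCommGroup E] [Module ℝ E] {K : Set E}
    (hK : IsConvexCone K) : (0 : E) ∈ K := by
  obtain ⟨⟨k, hk⟩, -, hs⟩ := hK
  simpa using hs 0 le_rfl k hk

theorem stmt_6
    {X Y Z : Type*}
    [NormedAddCommGroup X] [NormedSpace ℝ X]
    [NormedAddCommGroup Y] [NormedSpace ℝ Y]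
    [NormedAddCommGroup Z] [NormedSpace ℝ Z]
    (Yp : Set Y) (Zp : Set Z)
    (hYp : IsConvexCone Yp) (hZp : IsConvexCone Zp)
    (hYpInt : (interior Yp).Nonempty) (hZpInt : (interior Zp).Nonempty)
    (Ω : Set X) (hΩ : Convex ℝ Ω)
    (f : X → Y) (g : X → Z)
    (hf : ∀ u ∈ Ω, ∀ v ∈ Ω, ∀ t : ℝ, t ∈ Set.Icc (0:ℝ) 1 →
      t • f u + (1 - t) • f v - f (t • u + (1 - t) • v) ∈ Yp)
    (hg : ∀ u ∈ Ω, ∀ v ∈ Ω, ∀ t : ℝ, t ∈ Set.Icc (0:ℝ) 1 →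
      t • g u + (1 - t) • g v - g (t • u + (1 - t) • v) ∈ Zp)
    (hslater : ∃ x₁ ∈ Ω, -g x₁ ∈ interior Zp)
    (y₀ : Y) (hy₀ : y₀ ∈ W0 Ω f g Zp)
    (hne : (SepSet Ω f g Yp Zp y₀).Nonempty) :
    ∀ h ∈ SepSet Ω f g Yp Zp y₀,
      GraphLh Yp h = {p : Z × Y | h (p.1, -p.2) ≤ 0} := by
  rintro h ⟨h0, hle, hge⟩
  obtain ⟨k, hk⟩ := hYpInt
  obtain ⟨x₁, hx₁, hgx₁⟩ := hslater
  set a : Z →L[ℝ] ℝ := h.comp (ContinuousLinearMap.inl ℝ Z Y) with ha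
  set b : Y →L[ℝ] ℝ := h.comp (ContinuousLinearMap.inr ℝ Z Y) with hb
  have hab : ∀ z y, h (z, y) = a z + b y := by
    intro z y
    simp [ha, hb, ← map_add]
  have hapos : ∀ z ∈ Zp, 0 ≤ a z := by
    intro z hz
    have := hle z hz 0 hYp.zero_mem
    simp only [hab, map_neg, map_sub, map_zero] at this
    linarith
  have hbpos : ∀ y ∈ Yp, 0 ≤ b y := by
    intro y hy
    have := hle 0 hZp.zero_mem y hy
    simp only [hab, map_neg, map_sub, map_zero] at this
    linarith
  have hbk : 0 < b k := by
    by_contra hcon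
    have hb0 : b = 0 := eq_zero_of_nonneg_of_mem_interior b hbpos hk (not_lt.1 hcon)
    have ha0 : a = 0 := by
      refine eq_zero_of_nonneg_of_mem_interior a hapos hgx₁ ?_
      have := hge (g x₁ + 0, f x₁ + 0) ⟨x₁, hx₁, 0, hZp.zero_mem, 0, hYp.zero_mem, rfl⟩
      simpa [hab, hb0] using this
    apply h0
    refine ContinuousLinearMap.ext fun p => ?_
    simpa [ha0, hb0] using hab p.1 p.2
  ext ⟨z, y⟩
  constructor
  · rintro ⟨y', hy', hyy⟩
    have := hbpos _ hyy
    simp only [hab, map_neg, map_sub, Set.mem_ofPred_eq] at *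
    linarith
  · intro hzy
    simp only [hab, map_neg, Set.mem_ofPred_eq] at hzy
    -- `t` solves `b (y - t • k) = a z`.
    set t : ℝ := (b y - a z) / b k with ht
    have ht0 : 0 ≤ t := div_nonneg (by linarith) hbk.le
    have htk : t * b k = b y - a z := div_mul_cancel₀ _ hbk.ne'
    refine ⟨y - t • k, ?_, ?_⟩
    · simp only [hab, map_neg, map_sub, map_smul, smul_eq_mul]
      linarith
    · simpa using hYp.2.2 t ht0 k (interior_subset hk)

end
end

section
/- Let y₀ ∈ W(0), assume the Slater condition and suppose S_{Y_+}(y₀) ≠ ∅. If (z̄, ȳ) ∈ Graph(W_{Y_+}), then (-z̄, ȳ - y₀) ∈ Graph(L_h) for every h ∈ S_{Y_+}(y₀). -/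
open scoped Classical Pointwise

noncomputable section

/-!
A separating functional splits as `h (z, y) = φ z + ψ y`, where `φ` and `ψ` are nonnegative on
`Z_+` and `Y_+`. A nonzero functional that is nonnegative on a set is strictly positive on its
interior, so the Slater point forces `ψ ≠ 0`: otherwise `φ ≠ 0`, hence `φ (g x₁) < 0`, whereas
separation gives `φ (g x₁) ≥ 0`. Thus `ψ k > 0` for some `k ∈ Y_+`, and `ψ` maps `Y_+` onto
`[0, ∞)`. For `(z, y)` in the graph, `c = φ z + ψ (y - y₀) ≥ 0`; choosing `k' ∈ Y_+` with
`ψ k' = c`, the point `y - y₀ - k'` is annihilated by `h (-z, - ·)`, and adding `k'` to it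
gives `y - y₀`.
-/

/-- At an interior zero, a nonnegative functional would have a local minimum, so its derivative,
which is the functional itself, would vanish. -/
lemma pos_of_mem_interior_of_nonneg {E : Type*} [NormedAddCommGroup E] [NormedSpace ℝ E]
    {K : Set E} {φ : E →L[ℝ] ℝ} (hφ : φ ≠ 0) (hK : ∀ k ∈ K, 0 ≤ φ k) {x : E}
    (hx : x ∈ interior K) : 0 < φ x := by
  refine lt_of_le_of_ne (hK x (interior_subset hx)) fun h0 => hφ ?_
  have hmin : IsLocalMin φ x := by
    filter_upwards [mem_interior_iff_mem_nhds.mp hx] with k hk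
    exact h0 ▸ hK k hk
  simpa using hmin.fderiv_eq_zero

theorem stmt_7
    {X Y Z : Type*}
    [NormedAddCommGroup X] [NormedSpace ℝ X]
    [NormedAddCommGroup Y] [NormedSpace ℝ Y]
    [NormedAddCommGroup Z] [NormedSpace ℝ Z]
    (Yp : Set Y) (Zp : Set Z)
    (hYp : IsConvexCone Yp) (hZp : IsConvexCone Zp)
    (hYpInt : (interior Yp).Nonempty) (hZpInt : (interior Zp).Nonempty)
    (Ω : Set X) (hΩ : Convex ℝ Ω)
    (f : X → Y) (g : X → Z)
    (hf : ∀ u ∈ Ω, ∀ v ∈ Ω, ∀ t : ℝ, t ∈ Set.Icc (0:ℝ) 1 →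
      t • f u + (1 - t) • f v - f (t • u + (1 - t) • v) ∈ Yp)
    (hg : ∀ u ∈ Ω, ∀ v ∈ Ω, ∀ t : ℝ, t ∈ Set.Icc (0:ℝ) 1 →
      t • g u + (1 - t) • g v - g (t • u + (1 - t) • v) ∈ Zp)
    (hslater : ∃ x₁ ∈ Ω, -g x₁ ∈ interior Zp)
    (y₀ : Y) (hy₀ : y₀ ∈ W0 Ω f g Zp)
    (hne : (SepSet Ω f g Yp Zp y₀).Nonempty) :
    ∀ p ∈ GraphW Ω f g Yp Zp, ∀ h ∈ SepSet Ω f g Yp Zp y₀,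
      (-p.1, p.2 - y₀) ∈ GraphLh Yp h := by
  rintro ⟨z, y⟩ hp h ⟨h0, hcone, hgraph⟩
  set φ : Z →L[ℝ] ℝ := h.comp (ContinuousLinearMap.inl ℝ Z Y) with hφ
  set ψ : Y →L[ℝ] ℝ := h.comp (ContinuousLinearMap.inr ℝ Z Y) with hψ
  have hsplit : ∀ a b, h (a, b) = φ a + ψ b := fun a b => by
    simp [hφ, hψ, ← map_add]
  have hY0 : (0 : Y) ∈ Yp := by
    obtain ⟨k, hk⟩ := hYp.1
    simpa using hYp.2.2 0 le_rfl k hk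
  have hZ0 : (0 : Z) ∈ Zp := by
    obtain ⟨k, hk⟩ := hZp.1
    simpa using hZp.2.2 0 le_rfl k hk
  have hφnn : ∀ k ∈ Zp, 0 ≤ φ k := fun k hk => by
    have := hcone k hk 0 hY0
    simp only [hsplit, map_neg, map_sub, map_zero] at this
    linarith
  have hψnn : ∀ k ∈ Yp, 0 ≤ ψ k := fun k hk => by
    have := hcone 0 hZ0 k hk
    simp only [hsplit, map_neg, map_sub, map_zero] at this
    linarith
  have hψ0 : ψ ≠ 0 := by
    intro hz
    have hφ0 : φ ≠ 0 := fun hz' => h0 <| by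
      ext p
      all_goals simp [hsplit, hz, hz']
    obtain ⟨x₁, hx₁, hint⟩ := hslater
    have hpos := pos_of_mem_interior_of_nonneg hφ0 hφnn hint
    have hsep := hgraph (g x₁, f x₁) ⟨x₁, hx₁, 0, hZ0, 0, hY0, by simp⟩
    simp only [hsplit, hz, map_zero, ContinuousLinearMap.zero_apply, add_zero] at hsep
    rw [map_neg] at hpos
    linarith
  obtain ⟨k, hk⟩ := hYpInt
  have hkpos : 0 < ψ k := pos_of_mem_interior_of_nonneg hψ0 hψnn hk
  have hc : 0 ≤ φ z + ψ y - ψ y₀ := by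
    have := hgraph _ hp
    simp only [hsplit, map_zero] at this
    linarith
  -- `((φ z + ψ (y - y₀)) / ψ k) • k` is the cone element on which `ψ` is `φ z + ψ (y - y₀)`.
  refine ⟨y - y₀ - ((φ z + ψ y - ψ y₀) / ψ k) • k, ?_, ?_⟩
  · simp only [hsplit, map_neg, map_sub, map_smul, smul_eq_mul, div_mul_cancel₀ _ hkpos.ne']
    ring
  · simpa using hYp.2.2 _ (div_nonneg hc hkpos.le) k (interior_subset hk)

end
end

section
/- Assume the Slater condition. Let y₀ ∈ W(0) and let L_{y₀} be the Lagrange process of (P(0)) at y₀. Suppose the cone Graph(L_{y₀}) ⊆ Z × Y has a bounded base. Then y₀ is a minimal point of the program (P(0)) if and only if y₀ is a minimal point of the program (D_{L_{y₀}}). -/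
/-!
Write `h = (ζ, η)` for a separating functional: `ζ ≥ 0` on `Z_+`, `η ≥ 0` on `Y_+`, and
`η y₀ ≤ ζ (g x) + η (f x)` on `Ω`. A pair `(z, y)` in the graph of `L_h` satisfies `ζ z ≤ η y`.

A cone with a base contains no line (`IsBase.pointed`), and this makes both sides of the equivalence
true. Indeed the graph of the Lagrange process is then not the whole space, so separating
functionals exist. If `y₀ = f x + y + p` with `y ∈ L (g x)` and `p ∈ Y_+`, then
`η y₀ ≤ ζ (g x) + η (f x) ≤ η y + η (f x) = η y₀ - η p` forces `η p = 0` for every separating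
functional, so the graph contains both `(0, p)` and `(0, -p)`, whence `p = 0`.

The Slater condition makes `η` nonzero, hence positive somewhere on `Y_+`; this gives
`0 ∈ L_h (g x)` for feasible `x`, so the values of `(P(0))` are among those of the dual program
(`W0_subset_DSet`).
-/

open scoped Classical Pointwise

noncomputable section

/-- A functional nonnegative on a set and nonpositive at an interior point of it vanishes. -/
lemma eq_zero_of_nonneg_of_interior {E : Type*} [NormedAddCommGroup E] [NormedSpace ℝ E]
    {K : Set E} (φ : E →L[ℝ] ℝ) (hφ : ∀ k ∈ K, 0 ≤ φ k) {e : E} (he : e ∈ interior K)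
    (hle : φ e ≤ 0) (w : E) : φ w = 0 := by
  have key : ∀ w : E, 0 ≤ φ w := by
    intro w
    have hc : Filter.Tendsto (fun t : ℝ => e + t • w) (nhdsWithin 0 (Set.Ioi 0)) (nhds e) := by
      have : Continuous fun t : ℝ => e + t • w := by fun_prop
      simpa using (this.tendsto 0).mono_left nhdsWithin_le_nhds
    have h1 := hc.eventually (mem_interior_iff_mem_nhds.1 he)
    obtain ⟨t, ht, ht0⟩ := (h1.and self_mem_nhdsWithin).exists
    have h2 := hφ _ ht
    simp only [map_add, map_smul, smul_eq_mul] at h2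
    exact nonneg_of_mul_nonneg_right (by linarith : 0 ≤ t * φ w) ht0
  have := key (-w)
  rw [map_neg] at this
  linarith [key w]

/-- A cone with a base contains no line. -/
lemma IsBase.pointed {E : Type*} [NormedAddCommGroup E] [NormedSpace ℝ E] {K B : Set E}
    (hB : IsBase K B) {k : E} (hk : k ∈ K) (hk' : -k ∈ K) : k = 0 := by
  obtain ⟨-, hconv, -, h0, hrep⟩ := hB
  by_contra hne
  obtain ⟨⟨t, b⟩, ⟨ht, hb, e1⟩, -⟩ := hrep k hk hne
  obtain ⟨⟨s, c⟩, ⟨hs, hc, e2⟩, -⟩ := hrep (-k) hk' (neg_ne_zero.2 hne)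
  dsimp only at ht hb e1 hs hc e2
  have hts : 0 < t + s := by positivity
  -- If `k = t • b` and `-k = s • c`, then `0` is a convex combination of `b` and `c`.
  have hmem := hconv hb hc (a := t / (t + s)) (b := s / (t + s)) (by positivity) (by positivity)
    (by field_simp)
  have hz : (t / (t + s)) • b + (s / (t + s)) • c = 0 := by
    have : (t / (t + s)) • b + (s / (t + s)) • c = (t + s)⁻¹ • (t • b + s • c) := by
      rw [smul_add, smul_smul, smul_smul, div_eq_inv_mul, div_eq_inv_mul]
    rw [this, ← e1, ← e2, add_neg_cancel, smul_zero]
  rw [hz] at hmem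
  exact h0 (subset_closure hmem)

section Separation

variable {X Y Z : Type*} [NormedAddCommGroup Y] [NormedSpace ℝ Y]
  [NormedAddCommGroup Z] [NormedSpace ℝ Z] {Yp : Set Y} {Zp : Set Z} {Ω : Set X}
  {f : X → Y} {g : X → Z} {y₀ : Y} {h : (Z × Y) →L[ℝ] ℝ}

lemma apply_eq_add (h : (Z × Y) →L[ℝ] ℝ) (z : Z) (y : Y) : h (z, y) = h (z, 0) + h (0, y) := by
  rw [← map_add]; simp

lemma apply_zero_neg (h : (Z × Y) →L[ℝ] ℝ) (y : Y) : h (0, -y) = -h (0, y) := by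
  rw [← map_neg]; simp

lemma SepSet.nonneg_right (hZp : IsConvexCone Zp) (hh : h ∈ SepSet Ω f g Yp Zp y₀) {y : Y}
    (hy : y ∈ Yp) : 0 ≤ h (0, y) := by
  have h1 := hh.2.1 0 hZp.zero_mem y hy
  have h2 : h (-0, y₀ - y) = h (0, y₀) - h (0, y) := by rw [← map_sub]; simp
  linarith

lemma SepSet.nonneg_left (hYp : IsConvexCone Yp) (hh : h ∈ SepSet Ω f g Yp Zp y₀) {z : Z}
    (hz : z ∈ Zp) : 0 ≤ h (z, 0) := by
  have h1 := hh.2.1 z hz 0 hYp.zero_mem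
  have h2 : h (-z, y₀ - 0) = h (0, y₀) - h (z, 0) := by rw [← map_sub]; simp
  linarith

lemma SepSet.le_apply (hYp : IsConvexCone Yp) (hZp : IsConvexCone Zp)
    (hh : h ∈ SepSet Ω f g Yp Zp y₀) {x : X} (hx : x ∈ Ω) :
    h (0, y₀) ≤ h (g x, 0) + h (0, f x) := by
  rw [← apply_eq_add]
  exact hh.2.2 _ ⟨x, hx, 0, hZp.zero_mem, 0, hYp.zero_mem, by simp⟩

/-- Under the Slater condition the `Y`-component of a separating functional is positive at every
interior point of `Y_+`: otherwise it vanishes, and then so does the `Z`-component. -/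
lemma SepSet.pos_of_slater (hYp : IsConvexCone Yp) (hZp : IsConvexCone Zp)
    (hslater : ∃ x₁ ∈ Ω, -g x₁ ∈ interior Zp) (hh : h ∈ SepSet Ω f g Yp Zp y₀) {e : Y}
    (he : e ∈ interior Yp) : 0 < h (0, e) := by
  by_contra! hle
  obtain ⟨x, hx, hxi⟩ := hslater
  have hη : ∀ y, h (0, y) = 0 := eq_zero_of_nonneg_of_interior
    (h.comp (ContinuousLinearMap.inr ℝ Z Y))
    (fun k hk => by simpa using SepSet.nonneg_right hZp hh hk) he (by simpa using hle)
  have hgx := SepSet.le_apply hYp hZp hh hx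
  rw [hη, hη, add_zero] at hgx
  have hneg : h (-g x, 0) = -h (g x, 0) := by rw [← map_neg]; simp
  have hζ : ∀ z, h (z, 0) = 0 := eq_zero_of_nonneg_of_interior
    (h.comp (ContinuousLinearMap.inl ℝ Z Y))
    (fun k hk => by simpa using SepSet.nonneg_left hYp hh hk) hxi
    (by simpa [hneg] using hgx)
  refine hh.1 (ContinuousLinearMap.ext fun p => ?_)
  obtain ⟨z, y⟩ := p
  rw [apply_eq_add, hζ, hη]
  simp

lemma SepSet.le_of_mem_GraphLh (hZp : IsConvexCone Zp) (hh : h ∈ SepSet Ω f g Yp Zp y₀)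
    {z : Z} {y : Y} (hp : (z, y) ∈ GraphLh Yp h) : h (z, 0) ≤ h (0, y) := by
  obtain ⟨y', h0, hy⟩ := hp
  dsimp only at h0 hy
  have h1 := SepSet.nonneg_right hZp hh hy
  have h2 : h (0, y - y') = h (0, y) - h (0, y') := by rw [← map_sub]; simp
  rw [apply_eq_add, apply_zero_neg] at h0
  linarith

/-- Feasible values of `(P(0))` are feasible values of the Lagrange dual program. -/
lemma W0_subset_DSet (hYp : IsConvexCone Yp) (hZp : IsConvexCone Zp)
    (hYpInt : (interior Yp).Nonempty) (hslater : ∃ x₁ ∈ Ω, -g x₁ ∈ interior Zp) :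
    W0 Ω f g Zp ⊆ DSet Ω f g (GraphLag Ω f g Yp Zp y₀) := by
  rintro _ ⟨x, hx, hgx, rfl⟩
  refine ⟨x, hx, 0, ?_, by simp⟩
  unfold GraphLag
  split_ifs with hne
  · refine Set.mem_iInter₂.2 fun h hh => ?_
    obtain ⟨e, he⟩ := hYpInt
    have hpos := SepSet.pos_of_slater hYp hZp hslater hh he
    have hneg : h (-g x, 0) = -h (g x, 0) := by rw [← map_neg]; simp
    have hz := SepSet.nonneg_left hYp hh hgx
    rw [hneg] at hz
    -- `c` is chosen so that `h (g x, c • e) = 0`.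
    set c : ℝ := -h (g x, 0) / h (0, e) with hc
    have hc0 : 0 ≤ c := div_nonneg hz hpos.le
    refine ⟨-(c • e), ?_, ?_⟩
    · have h2 : h (0, c • e) = c * h (0, e) := by
        rw [← smul_eq_mul, ← map_smul]; simp
      dsimp only
      rw [neg_neg, apply_eq_add, h2, hc, div_mul_cancel₀ _ hpos.ne']
      ring
    · simpa using hYp.2.2 c hc0 e (interior_subset he)
  · trivial

/-- When the graph of the Lagrange process has a base, the only dual feasible value below `y₀` is
`y₀` itself. -/
lemma eq_of_mem_DSet_of_le (hYp : IsConvexCone Yp) (hZp : IsConvexCone Zp) {B : Set (Z × Y)}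
    (hB : IsBase (GraphLag Ω f g Yp Zp y₀) B) {y : Y}
    (hy : y ∈ DSet Ω f g (GraphLag Ω f g Yp Zp y₀)) (hle : y₀ - y ∈ Yp) : y = y₀ := by
  obtain ⟨x, hx, y', hy', rfl⟩ := hy
  have hne : (SepSet Ω f g Yp Zp y₀).Nonempty := by
    by_contra hne
    obtain ⟨b, hb⟩ := hB.1
    have hu : GraphLag Ω f g Yp Zp y₀ = Set.univ := if_neg hne
    have hb0 : b = 0 := hB.pointed (by rw [hu]; trivial) (by rw [hu]; trivial)
    exact hB.2.2.2.1 (subset_closure (hb0 ▸ hb))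
  have hG : GraphLag Ω f g Yp Zp y₀ = ⋂ h ∈ SepSet Ω f g Yp Zp y₀, GraphLh Yp h := if_pos hne
  rw [hG] at hy' hB
  set p := y₀ - (f x + y') with hp
  have hp0 : ((0 : Z), p) = 0 := by
    refine hB.pointed (Set.mem_iInter₂.2 fun h hh =>
        ⟨0, by rw [neg_zero]; exact map_zero h, by simpa using hle⟩)
      (Set.mem_iInter₂.2 fun h hh => ⟨-p, ?_, by simpa using hYp.zero_mem⟩)
    have h1 := SepSet.nonneg_right hZp hh hle
    have h2 := SepSet.le_apply hYp hZp hh hx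
    have h3 := SepSet.le_of_mem_GraphLh hZp hh (Set.mem_iInter₂.1 hy' h hh)
    have h4 : h (0, p) = h (0, y₀) - (h (0, f x) + h (0, y')) := by
      rw [← map_add, ← map_sub]; simp [hp]
    have h5 : h (0, p) = 0 := by linarith
    simpa using h5
  have : p = 0 := congrArg Prod.snd hp0
  exact (sub_eq_zero.1 this).symm

end Separation

theorem stmt_16
    {X Y Z : Type*}
    [NormedAddCommGroup X] [NormedSpace ℝ X]
    [NormedAddCommGroup Y] [NormedSpace ℝ Y]
    [NormedAddCommGroup Z] [NormedSpace ℝ Z]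
    (Yp : Set Y) (Zp : Set Z)
    (hYp : IsConvexCone Yp) (hZp : IsConvexCone Zp)
    (hYpInt : (interior Yp).Nonempty) (hZpInt : (interior Zp).Nonempty)
    (Ω : Set X) (hΩ : Convex ℝ Ω)
    (f : X → Y) (g : X → Z)
    (hf : ∀ u ∈ Ω, ∀ v ∈ Ω, ∀ t : ℝ, t ∈ Set.Icc (0:ℝ) 1 →
      t • f u + (1 - t) • f v - f (t • u + (1 - t) • v) ∈ Yp)
    (hg : ∀ u ∈ Ω, ∀ v ∈ Ω, ∀ t : ℝ, t ∈ Set.Icc (0:ℝ) 1 →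
      t • g u + (1 - t) • g v - g (t • u + (1 - t) • v) ∈ Zp)
    (hslater : ∃ x₁ ∈ Ω, -g x₁ ∈ interior Zp)
    (y₀ : Y) (hy₀ : y₀ ∈ W0 Ω f g Zp)
    (hbase : ∃ B : Set (Z × Y), IsBase (GraphLag Ω f g Yp Zp y₀) B ∧
      Bornology.IsBounded B) :
    IsMinimalPt Yp (W0 Ω f g Zp) y₀ ↔
      IsMinimalPt Yp (DSet Ω f g (GraphLag Ω f g Yp Zp y₀)) y₀ := by
  obtain ⟨B, hB, -⟩ := hbase
  have hsub : W0 Ω f g Zp ⊆ DSet Ω f g (GraphLag Ω f g Yp Zp y₀) :=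
    W0_subset_DSet hYp hZp hYpInt hslater
  have hD : IsMinimalPt Yp (DSet Ω f g (GraphLag Ω f g Yp Zp y₀)) y₀ := by
    refine ⟨hsub hy₀, fun y hy hle => ?_⟩
    rw [eq_of_mem_DSet_of_le hYp hZp hB hy hle, sub_self]
    exact hYp.zero_mem
  exact ⟨fun _ => hD, fun _ => ⟨hy₀, fun y hy hle => hD.2 y (hsub hy) hle⟩⟩

end
end
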